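/- Let f satisfy Condition B with constant K, let φ be a branching mechanism (with Lévy measure m) satisfying Grey's condition, let ψ be an immigration mechanism (with immigration measure ν), and suppose ∫_{(1,∞)} zⁿ (m+ν)(dz) < ∞ for every integer n ≥ 1. Let (Q^γ_t)_{t≥0} be the transition semigroup of the CBI-process with branching mechanism φ and immigration mechanism ψ. Then for every x ≥ 0, the function t ↦ ∫_{[0,∞)} f(z) Q^γ_t(x,dz) is finite for every t ≥ 0 and locally bounded on [0,∞). -/

import Mathlib

open MeasureTheory Set Filter

noncomputable section

/-- A positive continuous function on `[0,∞)` satisfying Condition A: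
there exist `c ≥ 0` and `K > 0` such that `f` is convex on `[c,∞)`,
`f (x*y) ≤ K * f x * f y` for `x, y ∈ [c,∞)`, and `f` is bounded on `[0,c)`. -/
def ConditionA (f : ℝ → ℝ) : Prop :=
  ContinuousOn f (Set.Ici 0) ∧ (∀ x, 0 ≤ x → 0 < f x) ∧
  ∃ c, 0 ≤ c ∧ ∃ K, 0 < K ∧
    ConvexOn ℝ (Set.Ici c) f ∧
    (∀ x y, c ≤ x → c ≤ y → f (x * y) ≤ K * f x * f y) ∧
    ∃ M, ∀ x, 0 ≤ x → x < c → f x ≤ M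

/-- Condition B with constant `K`: `f` is convex and nondecreasing on `[0,∞)`,
submultiplicative up to the constant `K`, and `f > 1` on `[0,∞)`. -/
def ConditionB (f : ℝ → ℝ) (K : ℝ) : Prop :=
  0 < K ∧ ConvexOn ℝ (Set.Ici 0) f ∧ MonotoneOn f (Set.Ici 0) ∧
  (∀ x y, 0 ≤ x → 0 ≤ y → f (x * y) ≤ K * f x * f y) ∧
  (∀ x, 0 ≤ x → 1 < f x)

/-- `φ` is a branching mechanism with parameters `β ∈ ℝ`, `σ ≥ 0` and Lévy
measure `m` (a σ-finite measure carried by `(0,∞)` with `∫ 1 ∧ z² m(dz) < ∞`):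
`φ(λ) = βλ + σ²λ²/2 + ∫ (e^{-zλ} - 1 + zλ 1_{z ≤ 1}) m(dz)`. -/
structure IsBranchingMechanism (φ : ℝ → ℝ) (β σ : ℝ) (m : Measure ℝ) : Prop where
  sigma_nonneg : 0 ≤ σ
  sigmaFinite : SigmaFinite m
  carrier : m (Set.Iic 0) = 0
  levy_finite : ∫⁻ z, ENNReal.ofReal (min 1 (z ^ 2)) ∂m < ⊤
  form : ∀ l, 0 ≤ l →
    φ l = β * l + σ ^ 2 * l ^ 2 / 2
      + ∫ z, (Real.exp (-(z * l)) - 1 + (if z ≤ 1 then z * l else 0)) ∂m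

/-- Grey's condition: `∫_{0+} φ(λ)⁻¹ dλ = ∞`, i.e. `φ⁻¹` fails to be
integrable on every right neighbourhood of `0`. -/
def GreyCondition (φ : ℝ → ℝ) : Prop :=
  ∀ ε, 0 < ε → ¬ IntegrableOn (fun l => (φ l)⁻¹) (Set.Ioo 0 ε) volume

/-- `v t l` is the nonnegative solution of `v_t(λ) = λ - ∫_0^t φ(v_s(λ)) ds`. -/
def IsCumulant (φ : ℝ → ℝ) (v : ℝ → ℝ → ℝ) : Prop :=
  ∀ l, 0 ≤ l → ∀ t, 0 ≤ t →
    0 ≤ v t l ∧ v t l = l - ∫ s in (0:ℝ)..t, φ (v s l)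

/-- `(Q t)_{t ≥ 0}` is the transition semigroup of the CB-process with cumulant
`v`: each `Q t x` is a probability measure on `[0,∞)` with Laplace transform
`∫ e^{-λ y} Q_t(x, dy) = e^{-x v_t(λ)}`. -/
def IsCBSemigroup (v : ℝ → ℝ → ℝ) (Q : ℝ → ℝ → Measure ℝ) : Prop :=
  ∀ t x, 0 ≤ t → 0 ≤ x →
    IsProbabilityMeasure (Q t x) ∧ Q t x (Set.Iio 0) = 0 ∧
    ∀ l, 0 ≤ l → ∫ y, Real.exp (-(l * y)) ∂(Q t x) = Real.exp (-(x * v t l))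

/-- `ψ` is an immigration mechanism with drift `h ≥ 0` and immigration measure
`ν` (a σ-finite measure carried by `(0,∞)` with `∫ 1 ∧ z ν(dz) < ∞`):
`ψ(λ) = hλ + ∫ (1 - e^{-λz}) ν(dz)`. -/
structure IsImmigrationMechanism (ψ : ℝ → ℝ) (h : ℝ) (ν : Measure ℝ) : Prop where
  h_nonneg : 0 ≤ h
  sigmaFinite : SigmaFinite ν
  carrier : ν (Set.Iic 0) = 0
  levy_finite : ∫⁻ z, ENNReal.ofReal (min 1 z) ∂ν < ⊤
  form : ∀ l, 0 ≤ l → ψ l = h * l + ∫ z, (1 - Real.exp (-(l * z))) ∂ν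

/-- `(Q^γ t)_{t ≥ 0}` is the transition semigroup of the CBI-process with
cumulant `v` and immigration mechanism `ψ`: each `Qγ t x` is a probability
measure on `[0,∞)` with Laplace transform
`∫ e^{-λ y} Q^γ_t(x, dy) = exp(-x v_t(λ) - ∫_0^t ψ(v_s(λ)) ds)`. -/
def IsCBISemigroup (v : ℝ → ℝ → ℝ) (ψ : ℝ → ℝ) (Qγ : ℝ → ℝ → Measure ℝ) : Prop :=
  ∀ t x, 0 ≤ t → 0 ≤ x →
    IsProbabilityMeasure (Qγ t x) ∧ Qγ t x (Set.Iio 0) = 0 ∧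
    ∀ l, 0 ≤ l →
      ∫ y, Real.exp (-(l * y)) ∂(Qγ t x)
        = Real.exp (-(x * v t l) - ∫ s in (0:ℝ)..t, ψ (v s l))

/-
If `m` and `ν` have `p`-th moments on `(1, ∞)`, then `φ` and `ψ` have Taylor expansions at `0` up
to an error `O(λ^p)`. With `b = φ'(0)`, the mild form `e^(b t) v_t(λ) = λ - ∫_0^t e^(b s)
(φ(v_s(λ)) - b v_s(λ)) ds` of the equation for `v`, whose integrand starts at degree two in `v`,
turns an expansion of `v` to order `n < p` into one to order `n + 1`. Hence `v`, and with it the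
Laplace transform of `Q^γ_t(x, ·)`, is a polynomial in `λ` up to `O(λ^p)`, uniformly for `t ∈ [0,
T]`. Its `p`-th forward difference of step `h` at `0`, which is `∫ (e^(-h y) - 1)^p Q^γ_t(x, dy)`,
is therefore at most `C h^p`. Dividing by `h^p`, Fatou's lemma bounds the `p`-th moment of
`Q^γ_t(x, ·)` by `C`. Finally, a function satisfying Condition B grows at most polynomially.
-/

section
open Polynomial Asymptotics
open scoped Topology

section Taylor
open scoped Nat

/-- The remainder of the Taylor expansion of `exp (-x)` at `0` after the terms of degree less
than `n`. -/
def expNegRemainder (n : ℕ) (x : ℝ) : ℝ :=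
  Real.exp (-x) - ∑ k ∈ Finset.range n, (-x) ^ k / k !

@[fun_prop]
theorem continuous_expNegRemainder (n : ℕ) : Continuous (expNegRemainder n) := by
  unfold expNegRemainder
  fun_prop

theorem expNegRemainder_succ (n : ℕ) (x : ℝ) :
    expNegRemainder (n + 1) x = expNegRemainder n x - (-x) ^ n / n ! := by
  simp only [expNegRemainder, Finset.sum_range_succ, sub_sub]

theorem expNegRemainder_zero (x : ℝ) : expNegRemainder 0 x = Real.exp (-x) := by
  simp [expNegRemainder]

theorem expNegRemainder_one (x : ℝ) : expNegRemainder 1 x = Real.exp (-x) - 1 := by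
  simp [expNegRemainder]

theorem expNegRemainder_two (x : ℝ) : expNegRemainder 2 x = Real.exp (-x) - 1 + x := by
  simp [expNegRemainder_succ, expNegRemainder_zero]

theorem neg_le_expNegRemainder_one (x : ℝ) : -x ≤ expNegRemainder 1 x := by
  rw [expNegRemainder_one]
  linarith [Real.add_one_le_exp (-x)]

theorem expNegRemainder_two_nonneg (x : ℝ) : 0 ≤ expNegRemainder 2 x := by
  rw [expNegRemainder_two]
  linarith [Real.add_one_le_exp (-x)]

theorem expNegRemainder_apply_zero (n : ℕ) : expNegRemainder (n + 1) 0 = 0 := by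
  simp [expNegRemainder, Finset.sum_range_succ']

theorem hasDerivAt_pow_succ_div_factorial (n : ℕ) (x : ℝ) :
    HasDerivAt (fun y : ℝ => y ^ (n + 1) / (n + 1)!) (x ^ n / n !) x := by
  refine ((hasDerivAt_pow (n + 1) x).div_const ((n + 1)! : ℝ)).congr_deriv ?_
  rw [Nat.factorial_succ]
  push_cast
  field_simp

theorem hasDerivAt_expNegRemainder (n : ℕ) (x : ℝ) :
    HasDerivAt (expNegRemainder (n + 1)) (-expNegRemainder n x) x := by
  induction n with
  | zero =>
    simpa [funext expNegRemainder_one, expNegRemainder_zero] using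
      (hasDerivAt_neg x).exp.sub_const 1
  | succ n ih =>
    have hterm := (hasDerivAt_pow_succ_div_factorial n (-x)).comp x (hasDerivAt_neg x)
    rw [funext (expNegRemainder_succ (n + 1))]
    exact (ih.sub hterm).congr_deriv (by rw [expNegRemainder_succ]; ring)

theorem abs_expNegRemainder_le (n : ℕ) {x : ℝ} (hx : 0 ≤ x) :
    |expNegRemainder n x| ≤ x ^ n / n ! := by
  induction n generalizing x with
  | zero => simpa [expNegRemainder_zero, abs_of_pos (Real.exp_pos _)] using hx
  | succ n ih =>
    exact image_norm_le_of_norm_deriv_right_le_deriv_boundary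
      (continuous_expNegRemainder (n + 1)).continuousOn
      (fun y _ => (hasDerivAt_expNegRemainder n y).hasDerivWithinAt)
      (by simp [expNegRemainder_apply_zero]) (hasDerivAt_pow_succ_div_factorial n)
      (fun y hy => by rw [norm_neg]; exact ih hy.1) (right_mem_Icc.2 hx)

/-- The integral of the Taylor remainder of `u ↦ exp (-(z * u))` after the terms of degree less
than `n`, with respect to `μ (dz)`. The integral terms of branching and immigration mechanisms are
of this form. -/
def laplaceRemainder (μ : Measure ℝ) (n : ℕ) (u : ℝ) : ℝ :=
  ∫ z, expNegRemainder n (z * u) ∂μ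

section laplaceRemainder
variable {μ : Measure ℝ} {n : ℕ}

theorem integrable_expNegRemainder (hpos : ∀ᵐ z ∂μ, 0 ≤ z) (hn : Integrable (fun z => z ^ n) μ)
    {u : ℝ} (hu : 0 ≤ u) : Integrable (fun z => expNegRemainder n (z * u)) μ := by
  refine (hn.mul_const (u ^ n / n !)).mono' (by fun_prop) ?_
  filter_upwards [hpos] with z hz
  exact (abs_expNegRemainder_le n (by positivity)).trans_eq (by ring)

theorem isBigO_laplaceRemainder (hpos : ∀ᵐ z ∂μ, 0 ≤ z) (hn : Integrable (fun z => z ^ n) μ) :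
    laplaceRemainder μ n =O[𝓝[≥] 0] fun u => u ^ n := by
  refine .of_bound ((∫ z, z ^ n ∂μ) / n !) ?_
  filter_upwards [self_mem_nhdsWithin] with u (hu : 0 ≤ u)
  rw [Real.norm_of_nonneg (pow_nonneg hu n)]
  calc ‖laplaceRemainder μ n u‖ ≤ ∫ z, z ^ n * (u ^ n / n !) ∂μ := by
        refine norm_integral_le_of_norm_le (hn.mul_const _) ?_
        filter_upwards [hpos] with z hz
        exact (abs_expNegRemainder_le n (by positivity)).trans_eq (by ring)
    _ = (∫ z, z ^ n ∂μ) / n ! * u ^ n := by rw [integral_mul_const]; ring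

theorem continuousOn_laplaceRemainder (hpos : ∀ᵐ z ∂μ, 0 ≤ z)
    (hn : Integrable (fun z => z ^ n) μ) : ContinuousOn (laplaceRemainder μ n) (Ici 0) := by
  intro u _
  refine continuousWithinAt_of_dominated (.of_forall fun _ => by fun_prop) ?_
    (hn.mul_const ((u + 1) ^ n / n !)) (.of_forall fun _ => by fun_prop)
  filter_upwards [self_mem_nhdsWithin, mem_nhdsWithin_of_mem_nhds (Iio_mem_nhds (lt_add_one u))]
    with w (hw : 0 ≤ w) hwu
  filter_upwards [hpos] with z hz
  calc |expNegRemainder n (z * w)| ≤ (z * w) ^ n / n ! :=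
        abs_expNegRemainder_le n (by positivity)
    _ = z ^ n * (w ^ n / n !) := by ring
    _ ≤ z ^ n * ((u + 1) ^ n / n !) := by gcongr; exact hwu.le

theorem laplaceRemainder_eq_add (hpos : ∀ᵐ z ∂μ, 0 ≤ z) (hn : Integrable (fun z => z ^ n) μ)
    (hn' : Integrable (fun z => z ^ (n + 1)) μ) {u : ℝ} (hu : 0 ≤ u) :
    laplaceRemainder μ n u
      = (∫ z, z ^ n ∂μ) * (-1) ^ n / n ! * u ^ n + laplaceRemainder μ (n + 1) u := by
  have hterm : ∫ z, z ^ n * ((-1) ^ n / n ! * u ^ n) ∂μ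
      = laplaceRemainder μ n u - laplaceRemainder μ (n + 1) u := by
    rw [laplaceRemainder, laplaceRemainder, ← integral_sub
      (integrable_expNegRemainder hpos hn hu) (integrable_expNegRemainder hpos hn' hu)]
    refine integral_congr_ae (.of_forall fun z => ?_)
    simp only [expNegRemainder_succ, neg_eq_neg_one_mul (z * u)]
    ring
  rw [integral_mul_const] at hterm
  linear_combination -hterm
end laplaceRemainder
end Taylor

/-- `G` is continuous on `[0, ∞)` and, up to an error `O(u ^ p)` as `u ↓ 0`, is a polynomial
without constant term. -/
def HasTaylorAtZero (p : ℕ) (G : ℝ → ℝ) : Prop :=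
  ContinuousOn G (Ici 0) ∧
    ∃ q : ℝ[X], (fun u => G u - u * q.eval u) =O[𝓝[≥] 0] fun u => u ^ p

theorem isBigO_pow_nhdsGE_zero {k n : ℕ} (hkn : k ≤ n) :
    (fun u : ℝ => u ^ n) =O[𝓝[≥] 0] fun u => u ^ k := by
  rcases hkn.eq_or_lt with rfl | hlt
  · exact isBigO_refl _ _
  · exact (isLittleO_pow_pow hlt).isBigO.mono nhdsWithin_le_nhds

namespace HasTaylorAtZero
variable {p : ℕ} {G H : ℝ → ℝ}

theorem of_isBigO (hcont : ContinuousOn G (Ici 0)) (hG : G =O[𝓝[≥] 0] fun u => u ^ p) :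
    HasTaylorAtZero p G :=
  ⟨hcont, 0, by simpa using hG⟩

theorem const_mul_pow (p : ℕ) (c : ℝ) {k : ℕ} (hk : 1 ≤ k) :
    HasTaylorAtZero p fun u => c * u ^ k := by
  obtain ⟨k, rfl⟩ := Nat.exists_eq_succ_of_ne_zero (Nat.one_le_iff_ne_zero.1 hk)
  refine ⟨by fun_prop, monomial k c, ?_⟩
  simp [pow_succ, mul_comm, mul_left_comm, isBigO_zero]

theorem add (hG : HasTaylorAtZero p G) (hH : HasTaylorAtZero p H) :
    HasTaylorAtZero p fun u => G u + H u := by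
  obtain ⟨hGc, q, hq⟩ := hG
  obtain ⟨hHc, r, hr⟩ := hH
  refine ⟨hGc.add hHc, q + r, (hq.add hr).congr_left fun u => ?_⟩
  rw [eval_add]
  ring

theorem neg (hG : HasTaylorAtZero p G) : HasTaylorAtZero p fun u => -G u := by
  obtain ⟨hGc, q, hq⟩ := hG
  refine ⟨hGc.neg, -q, hq.neg_left.congr_left fun u => ?_⟩
  rw [eval_neg]
  ring

theorem mono {k : ℕ} (hG : HasTaylorAtZero p G) (hkp : k ≤ p) : HasTaylorAtZero k G :=
  ⟨hG.1, hG.2.imp fun _ hq => hq.trans (isBigO_pow_nhdsGE_zero hkp)⟩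

theorem isBigO_id (hG : HasTaylorAtZero p G) (hp : 1 ≤ p) : G =O[𝓝[≥] 0] fun u => u := by
  obtain ⟨-, q, hq⟩ := hG
  have hqone : (fun u => q.eval u) =O[𝓝[≥] 0] fun _ => (1 : ℝ) :=
    (q.continuous.tendsto 0).isBigO_one ℝ |>.mono nhdsWithin_le_nhds
  have hpoly := ((isBigO_refl (fun u : ℝ => u) _).mul hqone).congr_right fun _ => mul_one _
  simpa using (hq.trans (by simpa using isBigO_pow_nhdsGE_zero hp)).add hpoly

theorem congr (hG : HasTaylorAtZero p G) (hHG : EqOn H G (Ici 0)) : HasTaylorAtZero p H := by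
  obtain ⟨hGc, q, hq⟩ := hG
  refine ⟨hGc.congr hHG, q, hq.congr' ?_ .rfl⟩
  filter_upwards [self_mem_nhdsWithin] with u hu
  rw [hHG hu]

theorem laplaceRemainder {μ : Measure ℝ} (hpos : ∀ᵐ z ∂μ, 0 ≤ z) {r : ℕ} (hr : 1 ≤ r)
    (hrp : r ≤ p) (hint : ∀ k, r ≤ k → k ≤ p → Integrable (fun z => z ^ k) μ) :
    HasTaylorAtZero p (laplaceRemainder μ r) := by
  have hp := hint p hrp le_rfl
  refine Nat.decreasingInduction' (P := fun k => HasTaylorAtZero p (_root_.laplaceRemainder μ k))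
    (fun k hkp hrk ih => ?_) hrp
    (of_isBigO (continuousOn_laplaceRemainder hpos hp) (isBigO_laplaceRemainder hpos hp))
  exact ((const_mul_pow p _ (hr.trans hrk)).add ih).congr fun u hu =>
    laplaceRemainder_eq_add hpos (hint k hrk hkp.le) (hint (k + 1) (hrk.trans k.le_succ) hkp) hu

end HasTaylorAtZero

section Moments
variable {μ : Measure ℝ}

theorem ae_pos_of_measure_Iic_eq_zero (hμ : μ (Iic 0) = 0) : ∀ᵐ z ∂μ, 0 < z :=
  measure_mono_null (fun z (hz : ¬0 < z) => not_lt.1 hz) hμ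

theorem integrableOn_Ioi_one_pow {k p : ℕ} (hkp : k ≤ p)
    (hlarge : ∫⁻ z in Ioi 1, ENNReal.ofReal (z ^ p) ∂μ < ⊤) :
    IntegrableOn (fun z => z ^ k) (Ioi 1) μ := by
  refine ⟨by fun_prop, ?_⟩
  have hpow : ∀ᵐ z ∂μ.restrict (Ioi 1), (0 : ℝ) ≤ z ^ k ∧ z ^ k ≤ z ^ p := by
    filter_upwards [ae_restrict_mem measurableSet_Ioi] with z (hz : 1 < z)
    exact ⟨pow_nonneg (zero_le_one.trans hz.le) k, pow_le_pow_right₀ hz.le hkp⟩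
  rw [hasFiniteIntegral_iff_ofReal (hpow.mono fun _ => And.left)]
  exact (lintegral_mono_ae (hpow.mono fun _ h => ENNReal.ofReal_le_ofReal h.2)).trans_lt hlarge

theorem integrableOn_Iic_one_pow (hpos : ∀ᵐ z ∂μ, 0 < z) {r k : ℕ} (hrk : r ≤ k)
    (hsmall : ∫⁻ z, ENNReal.ofReal (min 1 (z ^ r)) ∂μ < ⊤) :
    IntegrableOn (fun z => z ^ k) (Iic 1) μ := by
  refine ⟨by fun_prop, ?_⟩
  have hpow : ∀ᵐ z ∂μ.restrict (Iic 1), (0 : ℝ) ≤ z ^ k ∧ z ^ k ≤ min 1 (z ^ r) := by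
    filter_upwards [ae_restrict_mem measurableSet_Iic, ae_restrict_of_ae hpos] with z hz hz0
    exact ⟨by positivity, le_min (pow_le_one₀ hz0.le hz) (pow_le_pow_of_le_one hz0.le hz hrk)⟩
  rw [hasFiniteIntegral_iff_ofReal (hpow.mono fun _ => And.left)]
  calc ∫⁻ z in Iic 1, ENNReal.ofReal (z ^ k) ∂μ
      ≤ ∫⁻ z in Iic 1, ENNReal.ofReal (min 1 (z ^ r)) ∂μ :=
        lintegral_mono_ae (hpow.mono fun _ h => ENNReal.ofReal_le_ofReal h.2)
    _ ≤ ∫⁻ z, ENNReal.ofReal (min 1 (z ^ r)) ∂μ := setLIntegral_le_lintegral _ _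
    _ < ⊤ := hsmall

end Moments

theorem IsImmigrationMechanism.hasTaylorAtZero {ψ : ℝ → ℝ} {h : ℝ} {ν : Measure ℝ}
    (hψ : IsImmigrationMechanism ψ h ν) {p : ℕ} (hp : 1 ≤ p)
    (hν : ∫⁻ z in Ioi 1, ENNReal.ofReal (z ^ p) ∂ν < ⊤) : HasTaylorAtZero p ψ := by
  have hpos := ae_pos_of_measure_Iic_eq_zero hψ.carrier
  have hint (k : ℕ) (hk : 1 ≤ k) (hkp : k ≤ p) : Integrable (fun z => z ^ k) ν := by
    rw [← integrableOn_univ, ← Iic_union_Ioi (a := (1 : ℝ))]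
    exact (integrableOn_Iic_one_pow hpos hk (by simpa using hψ.levy_finite)).union
      (integrableOn_Ioi_one_pow hkp hν)
  refine ((HasTaylorAtZero.const_mul_pow p h le_rfl).add (HasTaylorAtZero.laplaceRemainder
    (hpos.mono fun _ => le_of_lt) le_rfl hp hint).neg).congr fun u hu => ?_
  simp only [hψ.form u hu, laplaceRemainder, ← integral_neg, expNegRemainder_one, neg_sub, pow_one,
    mul_comm u]

namespace IsBranchingMechanism
variable {φ : ℝ → ℝ} {β σ : ℝ} {m : Measure ℝ}

theorem integrableOn_Iic_one_pow (hφ : IsBranchingMechanism φ β σ m) {k : ℕ} (hk : 2 ≤ k) :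
    IntegrableOn (fun z => z ^ k) (Iic 1) m :=
  _root_.integrableOn_Iic_one_pow (ae_pos_of_measure_Iic_eq_zero hφ.carrier) hk hφ.levy_finite

theorem eq_add_laplaceRemainder (hφ : IsBranchingMechanism φ β σ m)
    (hm : IntegrableOn (fun z => z) (Ioi 1) m) {u : ℝ} (hu : 0 ≤ u) :
    φ u = β * u ^ 1 + σ ^ 2 / 2 * u ^ 2 + laplaceRemainder (m.restrict (Iic 1)) 2 u
      + laplaceRemainder (m.restrict (Ioi 1)) 1 u := by
  set F : ℝ → ℝ := fun z => Real.exp (-(z * u)) - 1 + (if z ≤ 1 then z * u else 0)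
  have hpos : ∀ᵐ z ∂m, 0 ≤ z :=
    (ae_pos_of_measure_Iic_eq_zero hφ.carrier).mono fun _ => le_of_lt
  have hsmall : EqOn F (fun z => expNegRemainder 2 (z * u)) (Iic 1) := fun z hz => by
    simp only [F, if_pos (mem_Iic.1 hz), expNegRemainder_two]
  have hlarge : EqOn F (fun z => expNegRemainder 1 (z * u)) (Ioi 1) := fun z hz => by
    simp only [F, if_neg (not_le.2 (mem_Ioi.1 hz)), expNegRemainder_one, add_zero]
  have hFsmall : IntegrableOn F (Iic 1) m := IntegrableOn.congr_fun (integrable_expNegRemainder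
    (ae_restrict_of_ae hpos) (hφ.integrableOn_Iic_one_pow le_rfl) hu) hsmall.symm measurableSet_Iic
  have hFlarge : IntegrableOn F (Ioi 1) m := IntegrableOn.congr_fun (integrable_expNegRemainder
    (ae_restrict_of_ae hpos) (by simpa [IntegrableOn] using hm) hu) hlarge.symm measurableSet_Ioi
  have hF : ∫ z, F z ∂m = laplaceRemainder (m.restrict (Iic 1)) 2 u
      + laplaceRemainder (m.restrict (Ioi 1)) 1 u := by
    rw [← setIntegral_univ, ← Iic_union_Ioi (a := (1 : ℝ)), setIntegral_union
      (Iic_disjoint_Ioi le_rfl) measurableSet_Ioi hFsmall hFlarge,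
      setIntegral_congr_fun measurableSet_Iic hsmall,
      setIntegral_congr_fun measurableSet_Ioi hlarge]
    rfl
  rw [hφ.form u hu, hF]
  ring

theorem hasTaylorAtZero (hφ : IsBranchingMechanism φ β σ m) {p : ℕ} (hp : 1 ≤ p)
    (hm : ∫⁻ z in Ioi 1, ENNReal.ofReal (z ^ p) ∂m < ⊤) : HasTaylorAtZero p φ := by
  have hpos : ∀ᵐ z ∂m, 0 ≤ z :=
    (ae_pos_of_measure_Iic_eq_zero hφ.carrier).mono fun _ => le_of_lt
  have hsmall : HasTaylorAtZero (p + 1) (laplaceRemainder (m.restrict (Iic 1)) 2) :=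
    .laplaceRemainder (ae_restrict_of_ae hpos) one_le_two (by lia)
      fun k hk _ => hφ.integrableOn_Iic_one_pow hk
  have hlarge : HasTaylorAtZero p (laplaceRemainder (m.restrict (Ioi 1)) 1) :=
    .laplaceRemainder (ae_restrict_of_ae hpos) le_rfl hp
      fun k _ hkp => integrableOn_Ioi_one_pow hkp hm
  exact ((((HasTaylorAtZero.const_mul_pow p β le_rfl).add
    (.const_mul_pow p (σ ^ 2 / 2) one_le_two)).add (hsmall.mono p.le_succ)).add hlarge).congr
    fun u hu => hφ.eq_add_laplaceRemainder (by simpa using integrableOn_Ioi_one_pow hp hm) hu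

theorem exists_mul_le (hφ : IsBranchingMechanism φ β σ m)
    (hm : IntegrableOn (fun z => z) (Ioi 1) m) : ∃ b, ∀ u, 0 ≤ u → b * u ≤ φ u := by
  refine ⟨β - ∫ z in Ioi 1, z ∂m, fun u hu => ?_⟩
  have hpos : ∀ᵐ z ∂m.restrict (Ioi 1), 0 ≤ z :=
    ae_restrict_of_ae ((ae_pos_of_measure_Iic_eq_zero hφ.carrier).mono fun _ => le_of_lt)
  have hsmall : 0 ≤ laplaceRemainder (m.restrict (Iic 1)) 2 u :=
    integral_nonneg fun z => expNegRemainder_two_nonneg (z * u)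
  have hlarge : -(∫ z in Ioi 1, z ∂m) * u ≤ laplaceRemainder (m.restrict (Ioi 1)) 1 u := by
    rw [← integral_neg, ← integral_mul_const]
    refine integral_mono (hm.neg.mul_const u)
      (integrable_expNegRemainder hpos (by simpa [IntegrableOn] using hm) hu) fun z => ?_
    simpa using neg_le_expNegRemainder_one (z * u)
  rw [hφ.eq_add_laplaceRemainder hm hu]
  nlinarith [sq_nonneg (σ * u)]

end IsBranchingMechanism

section UniformExpansion
variable {ι : Type*} {S : Set ι} {n : ℕ} {F G : ι × ℝ → ℝ}

/-- The filter on pairs `(t, l)` along which `l ↓ 0` uniformly in the parameter `t ∈ S`. -/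
def uniformNhdsGEZero (S : Set ι) : Filter (ι × ℝ) :=
  𝓟 S ×ˢ 𝓝[≥] 0

theorem eventually_uniformNhdsGEZero {P : ι × ℝ → Prop} :
    (∀ᶠ y in uniformNhdsGEZero S, P y) ↔ ∀ᶠ l in 𝓝[≥] (0 : ℝ), ∀ t ∈ S, P (t, l) := by
  rw [uniformNhdsGEZero, eventually_swap_iff, eventually_prod_principal_iff]
  rfl

theorem eventually_uniformNhdsGEZero_of_forall {P : ι × ℝ → Prop}
    (h : ∀ t ∈ S, ∀ l, 0 ≤ l → P (t, l)) : ∀ᶠ y in uniformNhdsGEZero S, P y :=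
  eventually_uniformNhdsGEZero.2 <| eventually_mem_nhdsWithin.mono fun l hl t ht => h t ht l hl

theorem tendsto_snd_uniformNhdsGEZero :
    Tendsto Prod.snd (uniformNhdsGEZero S) (𝓝[≥] (0 : ℝ)) :=
  tendsto_snd

theorem isBigO_snd_pow {k : ℕ} (hkn : k ≤ n) :
    (fun y : ι × ℝ => y.2 ^ n) =O[uniformNhdsGEZero S] fun y => y.2 ^ k :=
  (isBigO_pow_nhdsGE_zero hkn).comp_tendsto tendsto_snd_uniformNhdsGEZero

variable [TopologicalSpace ι]

theorem isBigO_one_of_continuousMap (hS : IsCompact S) (f : C(ι × ℝ, ℝ)) :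
    f =O[uniformNhdsGEZero S] fun _ => (1 : ℝ) := by
  obtain ⟨C, hC⟩ := (hS.prod (isCompact_Icc (a := (0 : ℝ)) (b := 1))).exists_bound_of_continuousOn
    f.continuous.continuousOn
  refine .of_bound C (eventually_uniformNhdsGEZero.2 ?_)
  filter_upwards [Icc_mem_nhdsGE (zero_lt_one' ℝ)] with l hl t ht
  simpa using hC (t, l) ⟨ht, hl⟩

/-- Evaluation of a polynomial in `l` whose coefficients are continuous functions of `t`, as a
continuous function of `(t, l)`. -/
def coeffEval : C(ι, ℝ)[X] →+* C(ι × ℝ, ℝ) :=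
  eval₂RingHom (ContinuousMap.compRightAlgHom ℝ ℝ ContinuousMap.fst).toRingHom ContinuousMap.snd

theorem coeffEval_monomial_apply (k : ℕ) (a : C(ι, ℝ)) (y : ι × ℝ) :
    coeffEval (monomial k a) y = a y.1 * y.2 ^ k := by
  simp [coeffEval]

theorem coeffEval_C_apply (a : C(ι, ℝ)) (y : ι × ℝ) : coeffEval (C a) y = a y.1 := by
  simp [coeffEval]

theorem coeffEval_X_apply (y : ι × ℝ) : coeffEval (X : C(ι, ℝ)[X]) y = y.2 := by
  simp [coeffEval]

/-- `F (t, l)` is, up to an error `O(l ^ n)` as `l ↓ 0` uniformly in `t ∈ S`, a polynomial in `l`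
with coefficients continuous in `t`. -/
def HasUniformExpansion (S : Set ι) (n : ℕ) (F : ι × ℝ → ℝ) : Prop :=
  ∃ P : C(ι, ℝ)[X], (fun y => F y - coeffEval P y) =O[uniformNhdsGEZero S] fun y => y.2 ^ n

namespace HasUniformExpansion

theorem of_isBigO (hF : F =O[uniformNhdsGEZero S] fun y => y.2 ^ n) : HasUniformExpansion S n F :=
  ⟨0, by simpa using hF⟩

theorem coeff (a : C(ι, ℝ)) : HasUniformExpansion S n fun y => a y.1 :=
  ⟨C a, by simp [coeffEval_C_apply, isBigO_zero]⟩

theorem snd : HasUniformExpansion S n Prod.snd :=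
  ⟨X, by simp [coeffEval_X_apply, isBigO_zero]⟩

theorem isBigO_one (hS : IsCompact S) (hF : HasUniformExpansion S n F) :
    F =O[uniformNhdsGEZero S] fun _ => (1 : ℝ) := by
  obtain ⟨P, hP⟩ := hF
  have hPone := isBigO_one_of_continuousMap hS (coeffEval P)
  simpa using (hP.trans (by simpa using isBigO_snd_pow n.zero_le)).add hPone

theorem add (hF : HasUniformExpansion S n F) (hG : HasUniformExpansion S n G) :
    HasUniformExpansion S n fun y => F y + G y := by
  obtain ⟨P, hP⟩ := hF
  obtain ⟨Q, hQ⟩ := hG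
  refine ⟨P + Q, (hP.add hQ).congr_left fun y => ?_⟩
  rw [map_add, ContinuousMap.add_apply]
  ring

theorem sub (hF : HasUniformExpansion S n F) (hG : HasUniformExpansion S n G) :
    HasUniformExpansion S n fun y => F y - G y := by
  obtain ⟨P, hP⟩ := hF
  obtain ⟨Q, hQ⟩ := hG
  refine ⟨P - Q, (hP.sub hQ).congr_left fun y => ?_⟩
  rw [map_sub, ContinuousMap.sub_apply]
  ring

theorem congr (hF : HasUniformExpansion S n F) (hGF : ∀ t ∈ S, ∀ l, 0 ≤ l → G (t, l) = F (t, l)) :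
    HasUniformExpansion S n G := by
  refine hF.imp fun P hP => hP.congr' ?_ .rfl
  exact eventually_uniformNhdsGEZero_of_forall fun t ht l hl => by simp only [hGF t ht l hl]

theorem of_sub_isBigO (hF : HasUniformExpansion S n F)
    (hGF : (fun y => G y - F y) =O[uniformNhdsGEZero S] fun y => y.2 ^ n) :
    HasUniformExpansion S n G := by
  simpa using hF.add (of_isBigO hGF)

theorem mul (hS : IsCompact S) (hF : HasUniformExpansion S n F) (hG : HasUniformExpansion S n G) :
    HasUniformExpansion S n fun y => F y * G y := by
  have hGone := hG.isBigO_one hS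
  obtain ⟨P, hP⟩ := hF
  obtain ⟨Q, hQ⟩ := hG
  have hPone := isBigO_one_of_continuousMap hS (coeffEval P)
  refine ⟨P * Q, (((hP.mul hGone).congr_right fun _ => mul_one _).add
    ((hPone.mul hQ).congr_right fun _ => one_mul _)).congr_left fun y => ?_⟩
  rw [map_mul, ContinuousMap.mul_apply]
  ring

-- The gain in order comes from `F * G - P * Q = (F - P) * G + P * (G - Q)`.
theorem mul_succ (hn : 1 ≤ n) (hF : HasUniformExpansion S n F) (hG : HasUniformExpansion S n G)
    (hF₀ : F =O[uniformNhdsGEZero S] Prod.snd) (hG₀ : G =O[uniformNhdsGEZero S] Prod.snd) :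
    HasUniformExpansion S (n + 1) fun y => F y * G y := by
  obtain ⟨P, hP⟩ := hF
  obtain ⟨Q, hQ⟩ := hG
  have hP₀ : coeffEval P =O[uniformNhdsGEZero S] Prod.snd := by
    simpa using hF₀.sub (hP.trans (by simpa using isBigO_snd_pow hn))
  refine ⟨P * Q, (((hP.mul hG₀).congr_right fun _ => (pow_succ _ _).symm).add
    ((hP₀.mul hQ).congr_right fun _ => (pow_succ' _ _).symm)).congr_left fun y => ?_⟩
  rw [map_mul, ContinuousMap.mul_apply]
  ring

theorem pow (hS : IsCompact S) (hF : HasUniformExpansion S n F) (k : ℕ) :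
    HasUniformExpansion S n fun y => F y ^ k := by
  induction k with
  | zero => simpa using coeff (S := S) (n := n) 1
  | succ k ih => simpa only [pow_succ] using ih.mul hS hF

theorem polynomial_eval (hS : IsCompact S) (hF : HasUniformExpansion S n F) (q : ℝ[X]) :
    HasUniformExpansion S n fun y => q.eval (F y) := by
  induction q using Polynomial.induction_on' with
  | add q r hq hr => simpa only [eval_add] using hq.add hr
  | monomial k c =>
    simpa using (coeff (S := S) (n := n) (.const ι c)).mul hS (hF.pow hS k)

theorem comp (hS : IsCompact S) (hF : HasUniformExpansion S n F)
    (hF₀ : F =O[uniformNhdsGEZero S] Prod.snd) {L : Filter ℝ}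
    (hFL : Tendsto F (uniformNhdsGEZero S) L) {g : ℝ → ℝ} {q : ℝ[X]}
    (hg : (fun u => g u - q.eval u) =O[L] fun u => u ^ n) :
    HasUniformExpansion S n fun y => g (F y) :=
  (hF.polynomial_eval hS q).of_sub_isBigO ((hg.comp_tendsto hFL).trans (hF₀.pow n))

theorem exp (hS : IsCompact S) (hF : HasUniformExpansion S n F)
    (hF₀ : F =O[uniformNhdsGEZero S] Prod.snd) :
    HasUniformExpansion S n fun y => Real.exp (F y) := by
  have hF_tendsto : Tendsto F (uniformNhdsGEZero S) (𝓝 0) :=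
    hF₀.trans_tendsto (tendsto_snd_uniformNhdsGEZero.mono_right nhdsWithin_le_nhds)
  refine hF.comp hS hF₀ hF_tendsto
    (q := ∑ k ∈ Finset.range n, monomial k (1 / (k.factorial : ℝ))) ?_
  simpa [eval_finsetSum, div_eq_inv_mul] using Real.exp_sub_sum_range_isBigO_pow n

end HasUniformExpansion
end UniformExpansion

section Integral
variable {T : ℝ} {n : ℕ} {F : ℝ × ℝ → ℝ}

theorem isBigO_intervalIntegral (hF : F =O[uniformNhdsGEZero (Icc 0 T)] fun y => y.2 ^ n) :
    (fun y : ℝ × ℝ => ∫ s in (0 : ℝ)..y.1, F (s, y.2)) =O[uniformNhdsGEZero (Icc 0 T)]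
      fun y => y.2 ^ n := by
  obtain ⟨c, hc₀, hc⟩ := hF.exists_nonneg
  refine .of_bound (c * T) (eventually_uniformNhdsGEZero.2 ?_)
  filter_upwards [eventually_uniformNhdsGEZero.1 hc.bound] with l hl t ht
  calc ‖∫ s in (0 : ℝ)..t, F (s, l)‖ ≤ c * ‖l ^ n‖ * |t - 0| :=
        intervalIntegral.norm_integral_le_of_norm_le_const fun s hs => by
          rw [uIoc_of_le ht.1] at hs
          exact hl s ⟨hs.1.le, hs.2.trans ht.2⟩
    _ = c * ‖l ^ n‖ * t := by rw [sub_zero, abs_of_nonneg ht.1]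
    _ ≤ c * ‖l ^ n‖ * T := by gcongr; exact ht.2
    _ = c * T * ‖l ^ n‖ := by ring

theorem exists_coeffEval_eq_intervalIntegral (P : C(ℝ, ℝ)[X]) :
    ∃ Q : C(ℝ, ℝ)[X], ∀ t l, coeffEval Q (t, l) = ∫ s in (0 : ℝ)..t, coeffEval P (s, l) := by
  induction P using Polynomial.induction_on' with
  | add P₁ P₂ h₁ h₂ =>
    obtain ⟨Q₁, hQ₁⟩ := h₁
    obtain ⟨Q₂, hQ₂⟩ := h₂
    refine ⟨Q₁ + Q₂, fun t l => ?_⟩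
    simp only [map_add, ContinuousMap.add_apply, hQ₁, hQ₂]
    exact (intervalIntegral.integral_add (Continuous.intervalIntegrable (by fun_prop) _ _)
      (Continuous.intervalIntegrable (by fun_prop) _ _)).symm
  | monomial k a =>
    refine ⟨monomial k ⟨fun t => ∫ s in (0 : ℝ)..t, a s, intervalIntegral.continuous_primitive
      (fun _ _ => a.continuous.intervalIntegrable _ _) 0⟩, fun t l => ?_⟩
    simp only [coeffEval_monomial_apply, ContinuousMap.coe_mk, intervalIntegral.integral_mul_const]

theorem HasUniformExpansion.intervalIntegral (hF : HasUniformExpansion (Icc 0 T) n F)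
    (hcont : ∀ l, 0 ≤ l → ContinuousOn (fun s => F (s, l)) (Icc 0 T)) :
    HasUniformExpansion (Icc 0 T) n fun y => ∫ s in (0 : ℝ)..y.1, F (s, y.2) := by
  obtain ⟨P, hP⟩ := hF
  obtain ⟨Q, hQ⟩ := exists_coeffEval_eq_intervalIntegral P
  refine ⟨Q, (isBigO_intervalIntegral hP).congr' ?_ .rfl⟩
  refine eventually_uniformNhdsGEZero_of_forall fun t ht l hl => ?_
  have hint : IntervalIntegrable (fun s => F (s, l)) volume 0 t := by
    refine ((hcont l hl).mono ?_).intervalIntegrable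
    rw [uIcc_of_le ht.1]
    exact Icc_subset_Icc_right ht.2
  simp only [hQ]
  exact intervalIntegral.integral_sub hint (Continuous.intervalIntegrable (by fun_prop) _ _)

end Integral

section ForwardDifference

theorem fwdDiff_iter_apply_zero (g : ℝ → ℝ) (h : ℝ) (n : ℕ) :
    (fwdDiff h)^[n] g 0
      = ∑ k ∈ Finset.range (n + 1), ((-1 : ℤ) ^ (n - k) * n.choose k) • g (k * h) := by
  simp only [fwdDiff_iter_eq_sum_shift, zero_add, nsmul_eq_mul]

theorem fwdDiff_iter_mul_pow_apply_zero (c h : ℝ) (k n : ℕ) :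
    (fwdDiff h)^[n] (fun l => c * l ^ k) 0
      = c * (fwdDiff 1)^[n] (fun l : ℝ => l ^ k) 0 * h ^ k := by
  simp only [fwdDiff_iter_apply_zero, Finset.mul_sum, Finset.sum_mul]
  refine Finset.sum_congr rfl fun j _ => ?_
  simp only [zsmul_eq_mul]
  ring

variable {ι : Type*} {S : Set ι} {n : ℕ} {F : ι × ℝ → ℝ}

theorem isBigO_fwdDiff_iter (hF : F =O[uniformNhdsGEZero S] fun y => y.2 ^ n) :
    (fun y : ι × ℝ => (fwdDiff y.2)^[n] (fun l => F (y.1, l)) 0) =O[uniformNhdsGEZero S]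
      fun y => y.2 ^ n := by
  simp only [fwdDiff_iter_apply_zero]
  refine IsBigO.fun_sum (E' := ℝ) fun k _ => ?_
  have hscale : Tendsto (fun y : ι × ℝ => (y.1, k * y.2)) (uniformNhdsGEZero S)
      (uniformNhdsGEZero S) := by
    refine tendsto_id.prodMap (tendsto_nhdsWithin_iff.2 ⟨?_, ?_⟩)
    · exact ((continuous_const_mul (k : ℝ)).tendsto' 0 0 (mul_zero _)).mono_left nhdsWithin_le_nhds
    · exact eventually_mem_nhdsWithin.mono fun l (hl : 0 ≤ l) => mem_Ici.2 (by positivity)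
  have hpow : (fun y : ι × ℝ => (k * y.2) ^ n) =O[uniformNhdsGEZero S] fun y => y.2 ^ n := by
    simpa only [mul_pow] using (isBigO_refl _ _).const_mul_left ((k : ℝ) ^ n)
  simpa only [zsmul_eq_mul, Function.comp_apply] using
    ((hF.comp_tendsto hscale).trans hpow).const_mul_left _

variable [TopologicalSpace ι]

theorem isBigO_fwdDiff_iter_coeffEval (hS : IsCompact S) (n : ℕ) (P : C(ι, ℝ)[X]) :
    (fun y : ι × ℝ => (fwdDiff y.2)^[n] (fun l => coeffEval P (y.1, l)) 0)
      =O[uniformNhdsGEZero S] fun y => y.2 ^ n := by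
  induction P using Polynomial.induction_on' with
  | add P₁ P₂ h₁ h₂ =>
    refine (h₁.add h₂).congr_left fun y => ?_
    simp only [fwdDiff_iter_apply_zero, map_add, ContinuousMap.add_apply, smul_add,
      Finset.sum_add_distrib]
  | monomial k a =>
    simp only [coeffEval_monomial_apply, fwdDiff_iter_mul_pow_apply_zero]
    rcases lt_or_ge k n with hkn | hnk
    · simp [fwdDiff_iter_pow_eq_zero_of_lt hkn, isBigO_zero]
    · have ha := (HasUniformExpansion.coeff (S := S) (n := n) a).isBigO_one hS
      simpa using ((ha.trans (isBigO_const_const _ one_ne_zero _)).mul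
        (isBigO_const_const ((fwdDiff 1)^[n] (fun l : ℝ => l ^ k) 0) one_ne_zero _)).mul
        (isBigO_snd_pow hnk)

theorem HasUniformExpansion.isBigO_fwdDiff_iter (hS : IsCompact S)
    (hF : HasUniformExpansion S n F) :
    (fun y : ι × ℝ => (fwdDiff y.2)^[n] (fun l => F (y.1, l)) 0) =O[uniformNhdsGEZero S]
      fun y => y.2 ^ n := by
  obtain ⟨P, hP⟩ := hF
  refine ((_root_.isBigO_fwdDiff_iter hP).add
    (isBigO_fwdDiff_iter_coeffEval hS n P)).congr_left fun y => ?_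
  simp only [fwdDiff_iter_apply_zero, ← Finset.sum_add_distrib, ← smul_add, sub_add_cancel]

end ForwardDifference

namespace IsCumulant
variable {φ : ℝ → ℝ} {v : ℝ → ℝ → ℝ} {b l t T : ℝ}

theorem apply_zero (hv : IsCumulant φ v) (hl : 0 ≤ l) : v 0 l = l := by
  simpa using (hv l hl 0 le_rfl).2

theorem continuousOn_of_intervalIntegrable (hv : IsCumulant φ v) (hl : 0 ≤ l) (ht : 0 ≤ t)
    (hint : IntervalIntegrable (fun s => φ (v s l)) volume 0 t) :
    ContinuousOn (fun s => v s l) (Icc 0 t) := by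
  have hprim := intervalIntegral.continuousOn_primitive_interval
    ((intervalIntegrable_iff_integrableOn_Icc_of_le ht).1 hint |>.mono_set (uIcc_of_le ht).subset)
  rw [uIcc_of_le ht] at hprim
  exact (continuousOn_const.sub hprim).congr fun s hs => (hv l hl s hs.1).2

theorem continuousOn_comp {χ : ℝ → ℝ} (hχ : ContinuousOn χ (Ici 0)) (hv : IsCumulant φ v)
    (hl : 0 ≤ l) (hcont : ContinuousOn (fun s => v s l) (Icc 0 t)) :
    ContinuousOn (fun s => χ (v s l)) (Icc 0 t) :=
  hχ.comp hcont fun s hs => (hv l hl s hs.1).1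

theorem hasDerivAt (hv : IsCumulant φ v) (hφ : ContinuousOn φ (Ici 0)) (hl : 0 ≤ l)
    (hcont : ContinuousOn (fun s => v s l) (Icc 0 t)) {s : ℝ} (hs : s ∈ Ioo 0 t) :
    HasDerivAt (fun r => v r l) (-φ (v s l)) s := by
  have hφv := continuousOn_comp hφ hv hl hcont
  have hprim : HasDerivAt (fun r => ∫ q in (0 : ℝ)..r, φ (v q l)) (φ (v s l)) s := by
    refine intervalIntegral.integral_hasDerivAt_right ?_
      ((hφv.mono Ioo_subset_Icc_self).stronglyMeasurableAtFilter isOpen_Ioo s hs)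
      (hφv.continuousAt (Icc_mem_nhds hs.1 hs.2))
    refine (hφv.mono ?_).intervalIntegrable
    rw [uIcc_of_le hs.1.le]
    exact Icc_subset_Icc_right hs.2.le
  refine (hprim.const_sub l).congr_of_eventuallyEq ?_
  filter_upwards [Ioi_mem_nhds hs.1] with r hr
  exact (hv l hl r (le_of_lt hr)).2

theorem exp_mul_eq_sub_intervalIntegral (hv : IsCumulant φ v) (hφ : ContinuousOn φ (Ici 0))
    (hl : 0 ≤ l) (ht : 0 ≤ t) (hcont : ContinuousOn (fun s => v s l) (Icc 0 t)) (b : ℝ) :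
    Real.exp (b * t) * v t l
      = l - ∫ s in (0 : ℝ)..t, Real.exp (b * s) * (φ (v s l) - b * v s l) := by
  have hexp (s : ℝ) : HasDerivAt (fun s => Real.exp (b * s)) (Real.exp (b * s) * b) s := by
    simpa using ((hasDerivAt_id s).const_mul b).exp
  have hexpc : Continuous fun s => Real.exp (b * s) := by fun_prop
  have hderiv (s : ℝ) (hs : s ∈ Ioo 0 t) : HasDerivAt (fun s => Real.exp (b * s) * v s l)
      (-(Real.exp (b * s) * (φ (v s l) - b * v s l))) s :=
    ((hexp s).mul (hv.hasDerivAt hφ hl hcont hs)).congr_deriv (by ring)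
  have hint : IntervalIntegrable
      (fun s => -(Real.exp (b * s) * (φ (v s l) - b * v s l))) volume 0 t := by
    refine ContinuousOn.intervalIntegrable ?_
    rw [uIcc_of_le ht]
    exact (hexpc.continuousOn.mul
      ((continuousOn_comp hφ hv hl hcont).sub (hcont.const_smul b))).neg
  have hftc := intervalIntegral.integral_eq_sub_of_hasDerivAt_of_le ht
    (hexpc.continuousOn.mul hcont) hderiv hint
  simp only [intervalIntegral.integral_neg, Pi.mul_apply, hv.apply_zero hl, mul_zero, Real.exp_zero,
    one_mul] at hftc
  linarith

theorem aestronglyMeasurable_comp (hv : IsCumulant φ v) (hφ : ContinuousOn φ (Ici 0))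
    (hl : 0 ≤ l) : AEStronglyMeasurable (fun s => φ (v s l)) (volume.restrict (Ioc 0 t)) := by
  set J := {s | s ∈ Ioc 0 t ∧ IntervalIntegrable (fun r => φ (v r l)) volume 0 s}
  have hcont (s : ℝ) (hs : s ∈ J) : ContinuousOn (fun r => φ (v r l)) (Icc 0 s) :=
    continuousOn_comp hφ hv hl (hv.continuousOn_of_intervalIntegrable hl hs.1.1.le hs.2)
  have hJ : MeasurableSet J := by
    refine OrdConnected.measurableSet ⟨fun a ha c hc s hs => ⟨⟨ha.1.1.trans_le hs.1,
      hs.2.trans hc.1.2⟩, hc.2.mono_set ?_⟩⟩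
    rw [uIcc_of_le (ha.1.1.le.trans hs.1), uIcc_of_le hc.1.1.le]
    exact Icc_subset_Icc_right hs.2
  have hcontJ : ContinuousOn (fun s => φ (v s l)) J := fun s hs => by
    by_cases hmax : ∃ r ∈ J, s < r
    · obtain ⟨r, hr, hsr⟩ := hmax
      exact (hcont r hr).continuousAt (Icc_mem_nhds hs.1.1 hsr) |>.continuousWithinAt
    · push Not at hmax
      exact (hcont s hs s (right_mem_Icc.2 hs.1.1.le)).mono fun r hr => ⟨hr.1.1.le, hmax r hr⟩
  have hconst : EqOn (fun s => φ (v s l)) (fun _ => φ l) (Ioc 0 t \ J) := fun s hs => by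
    have hint : ¬IntervalIntegrable (fun r => φ (v r l)) volume 0 s := fun h => hs.2 ⟨hs.1, h⟩
    simp only [(hv l hl s hs.1.1.le).2, intervalIntegral.integral_undef hint, sub_zero]
  rw [← union_sdiff_cancel (show J ⊆ Ioc 0 t from fun s hs => hs.1), aestronglyMeasurable_union_iff]
  exact ⟨hcontJ.aestronglyMeasurable hJ, aestronglyMeasurable_const.congr
    (ae_restrict_of_forall_mem (measurableSet_Ioc.diff hJ) hconst.symm)⟩

section LinearLowerBound
variable (hv : IsCumulant φ v) (hφ : ContinuousOn φ (Ici 0)) (hb : ∀ u, 0 ≤ u → b * u ≤ φ u)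
include hv hφ hb

-- Where `s ↦ φ (v s l)` is not integrable, the integral is `0` and `v t l = l`.
theorem le_exp_abs_mul (hl : 0 ≤ l) (ht : 0 ≤ t) : v t l ≤ Real.exp (|b| * t) * l := by
  by_cases hint : IntervalIntegrable (fun s => φ (v s l)) volume 0 t
  · have hmild := hv.exp_mul_eq_sub_intervalIntegral hφ hl ht
      (hv.continuousOn_of_intervalIntegrable hl ht hint) b
    have hnonneg : 0 ≤ ∫ s in (0 : ℝ)..t, Real.exp (b * s) * (φ (v s l) - b * v s l) :=
      intervalIntegral.integral_nonneg ht fun s hs =>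
        mul_nonneg (Real.exp_pos _).le (sub_nonneg.2 (hb _ (hv l hl s hs.1).1))
    calc v t l = Real.exp (-(b * t)) * (Real.exp (b * t) * v t l) := by
          rw [← mul_assoc, ← Real.exp_add, neg_add_cancel, Real.exp_zero, one_mul]
      _ ≤ Real.exp (-(b * t)) * l := by gcongr; linarith
      _ ≤ Real.exp (|b| * t) * l := by
          gcongr
          rw [← neg_mul]
          exact mul_le_mul_of_nonneg_right (neg_le_abs b) ht
  · have hvl : v t l = l := by
      rw [(hv l hl t ht).2, intervalIntegral.integral_undef hint, sub_zero]
    rw [hvl]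
    exact le_mul_of_one_le_left hl (Real.one_le_exp (by positivity))

theorem intervalIntegrable (hl : 0 ≤ l) (ht : 0 ≤ t) :
    IntervalIntegrable (fun s => φ (v s l)) volume 0 t := by
  obtain ⟨C, hC⟩ := isCompact_Icc.exists_bound_of_continuousOn
    (hφ.mono (Icc_subset_Ici_self (a := Real.exp (|b| * t) * l) (b := 0)))
  have hbound (s : ℝ) (hs : s ∈ Ioc 0 t) : ‖φ (v s l)‖ ≤ C := by
    refine hC _ ⟨(hv l hl s hs.1.le).1, (hv.le_exp_abs_mul hφ hb hl hs.1.le).trans ?_⟩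
    have := hs.2
    gcongr
  rw [intervalIntegrable_iff_integrableOn_Ioc_of_le ht]
  exact IntegrableOn.of_bound measure_Ioc_lt_top (hv.aestronglyMeasurable_comp hφ hl) C
    (ae_restrict_of_forall_mem measurableSet_Ioc hbound)

theorem continuousOn (hl : 0 ≤ l) : ContinuousOn (fun s => v s l) (Icc 0 t) := by
  rcases le_or_gt 0 t with ht | ht
  · exact hv.continuousOn_of_intervalIntegrable hl ht (hv.intervalIntegrable hφ hb hl ht)
  · simp [Icc_eq_empty_of_lt ht]

theorem isBigO_snd (T : ℝ) :
    (fun y : ℝ × ℝ => v y.1 y.2) =O[uniformNhdsGEZero (Icc 0 T)] Prod.snd := by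
  refine .of_bound (Real.exp (|b| * T)) (eventually_uniformNhdsGEZero_of_forall fun t ht l hl => ?_)
  rw [Real.norm_of_nonneg (hv l hl t ht.1).1, Real.norm_of_nonneg hl]
  refine (hv.le_exp_abs_mul hφ hb hl ht.1).trans ?_
  have := ht.2
  gcongr

theorem tendsto_nhdsGE (T : ℝ) :
    Tendsto (fun y : ℝ × ℝ => v y.1 y.2) (uniformNhdsGEZero (Icc 0 T)) (𝓝[≥] 0) :=
  tendsto_nhdsWithin_iff.2 ⟨(hv.isBigO_snd hφ hb T).trans_tendsto
    (tendsto_snd_uniformNhdsGEZero.mono_right nhdsWithin_le_nhds),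
    eventually_uniformNhdsGEZero_of_forall fun t ht l hl => (hv l hl t ht.1).1⟩
end LinearLowerBound

section Expansion
variable {p n : ℕ} (hv : IsCumulant φ v) (hφ : HasTaylorAtZero p φ)
  (hb : ∀ u, 0 ≤ u → b * u ≤ φ u)
include hv hφ hb

theorem hasUniformExpansion_succ (hn : 1 ≤ n) (hnp : n < p)
    (hV : HasUniformExpansion (Icc 0 T) n fun y => v y.1 y.2) :
    HasUniformExpansion (Icc 0 T) (n + 1) fun y => v y.1 y.2 := by
  obtain ⟨hφc, q, hq⟩ := hφ
  have hS : IsCompact (Icc 0 T) := isCompact_Icc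
  have hVO := hv.isBigO_snd hφc hb T
  set c := q.coeff 0
  have hquad : HasUniformExpansion (Icc 0 T) (n + 1)
      fun y => v y.1 y.2 * (v y.1 y.2 * q.divX.eval (v y.1 y.2)) := by
    have hdivX := hV.polynomial_eval hS q.divX
    exact hV.mul_succ hn (hV.mul hS hdivX) hVO
      ((hVO.mul (hdivX.isBigO_one hS)).congr_right fun _ => mul_one _)
  have hnonlin : HasUniformExpansion (Icc 0 T) (n + 1)
      fun y => φ (v y.1 y.2) - c * v y.1 y.2 := by
    refine hquad.of_sub_isBigO ((((hq.comp_tendsto (hv.tendsto_nhdsGE hφc hb T)).trans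
      (hVO.pow p)).trans (isBigO_snd_pow hnp)).congr_left fun y => ?_)
    simp only [Function.comp_apply]
    conv_lhs => rw [← X_mul_divX_add q]
    simp only [eval_add, eval_mul, eval_X, eval_C, c]
    ring
  have hexp (a : ℝ) : HasUniformExpansion (Icc 0 T) (n + 1) fun y => Real.exp (a * y.1) :=
    .coeff (⟨fun t => Real.exp (a * t), by fun_prop⟩ : C(ℝ, ℝ))
  have hcont (l : ℝ) (hl : 0 ≤ l) := hv.continuousOn (t := T) hφc hb hl
  have hintegral := ((hexp c).mul hS hnonlin).intervalIntegral fun l hl =>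
    (Continuous.continuousOn (by fun_prop)).mul
      ((continuousOn_comp hφc hv hl (hcont l hl)).sub ((hcont l hl).const_smul c))
  refine ((hexp (-c)).mul hS (HasUniformExpansion.snd.sub hintegral)).congr fun t ht l hl => ?_
  rw [← hv.exp_mul_eq_sub_intervalIntegral hφc hl ht.1
    ((hcont l hl).mono (Icc_subset_Icc_right ht.2)), ← mul_assoc, ← Real.exp_add, neg_mul,
    neg_add_cancel, Real.exp_zero, one_mul]

theorem hasUniformExpansion (hp : 1 ≤ p) (T : ℝ) :
    HasUniformExpansion (Icc 0 T) p fun y => v y.1 y.2 := by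
  suffices h : ∀ n, 1 ≤ n → n ≤ p → HasUniformExpansion (Icc 0 T) n fun y => v y.1 y.2 from
    h p hp le_rfl
  intro n hn
  induction n, hn using Nat.le_induction with
  | base =>
    exact fun _ => .of_isBigO (by simpa using hv.isBigO_snd hφ.1 hb T)
  | succ n hn ih =>
    exact fun hnp => hv.hasUniformExpansion_succ hφ hb hn hnp (ih (by lia))

theorem hasUniformExpansion_exp (hp : 1 ≤ p) {ψ : ℝ → ℝ} (hψ : HasTaylorAtZero p ψ) (x T : ℝ) :
    HasUniformExpansion (Icc 0 T) p
      fun y => Real.exp (-(x * v y.1 y.2) - ∫ s in (0 : ℝ)..y.1, ψ (v s y.2)) := by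
  have hS : IsCompact (Icc 0 T) := isCompact_Icc
  have hV := hv.hasUniformExpansion hφ hb hp T
  have hVO := hv.isBigO_snd hφ.1 hb T
  have hVtendsto := hv.tendsto_nhdsGE hφ.1 hb T
  have hψV : HasUniformExpansion (Icc 0 T) p fun y => ψ (v y.1 y.2) := by
    obtain ⟨-, q, hq⟩ := hψ
    exact hV.comp hS hVO hVtendsto (q := X * q) (by simpa using hq)
  have hψVO : (fun y : ℝ × ℝ => ψ (v y.1 y.2)) =O[uniformNhdsGEZero (Icc 0 T)] Prod.snd :=
    ((hψ.isBigO_id hp).comp_tendsto hVtendsto).trans hVO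
  have hintegral := hψV.intervalIntegral fun l hl =>
    continuousOn_comp hψ.1 hv hl (hv.continuousOn hφ.1 hb hl)
  have hintegralO := isBigO_intervalIntegral (n := 1) (by simpa using hψVO)
  simp only [← neg_mul]
  exact (((HasUniformExpansion.coeff (.const ℝ (-x))).mul hS hV).sub hintegral).exp hS
    ((hVO.const_mul_left (-x)).sub (by simpa using hintegralO))
end Expansion
end IsCumulant

section LaplaceMoments

theorem fwdDiff_iter_integral {α : Type*} [MeasurableSpace α] {μ : Measure α} {g : ℝ → α → ℝ}
    {h : ℝ} (hg : ∀ k : ℕ, Integrable (g (k * h)) μ) (n : ℕ) :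
    (fwdDiff h)^[n] (fun l => ∫ y, g l y ∂μ) 0 = ∫ y, (fwdDiff h)^[n] (fun l => g l y) 0 ∂μ := by
  simp only [fwdDiff_iter_apply_zero, zsmul_eq_mul]
  rw [integral_finsetSum _ fun k _ => (hg k).const_mul _]
  simp only [integral_const_mul]

theorem fwdDiff_iter_exp_neg_mul (h y : ℝ) (n : ℕ) :
    (fwdDiff h)^[n] (fun l => Real.exp (-(l * y))) 0 = (Real.exp (-(h * y)) - 1) ^ n := by
  let χ : AddChar ℝ ℝ :=
    { toFun := fun l => Real.exp (-(l * y))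
      map_zero_eq_one' := by simp
      map_add_eq_mul' := fun a b => by rw [← Real.exp_add]; ring_nf }
  simpa only [χ.map_zero_eq_one, mul_one] using! fwdDiff_addChar_eq χ 0 h n

theorem tendsto_one_sub_exp_neg_mul_div (y : ℝ) :
    Tendsto (fun h => (1 - Real.exp (-(h * y))) / h) (𝓝[>] 0) (𝓝 y) := by
  have hderiv : HasDerivAt (fun h => 1 - Real.exp (-(h * y))) y 0 := by
    simpa using ((hasDerivAt_mul_const y).neg.exp.const_sub (1 : ℝ) (x := 0))
  simpa [div_eq_inv_mul] using hderiv.tendsto_slope_zero_right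

variable {Q : Measure ℝ} {n : ℕ} {h : ℝ}

theorem one_sub_exp_neg_mul_nonneg {y : ℝ} (hh : 0 ≤ h) (hy : 0 ≤ y) :
    0 ≤ 1 - Real.exp (-(h * y)) :=
  sub_nonneg.2 (Real.exp_le_one_iff.2 (neg_nonpos.2 (mul_nonneg hh hy)))

theorem integrable_exp_neg_mul [IsFiniteMeasure Q] (hpos : ∀ᵐ y ∂Q, 0 ≤ y) (hh : 0 ≤ h) :
    Integrable (fun y => Real.exp (-(h * y))) Q := by
  refine .of_bound (by fun_prop) 1 (hpos.mono fun y hy => ?_)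
  rw [Real.norm_of_nonneg (Real.exp_pos _).le]
  exact sub_nonneg.1 (one_sub_exp_neg_mul_nonneg hh hy)

theorem integral_one_sub_exp_neg_mul_pow [IsFiniteMeasure Q] (hpos : ∀ᵐ y ∂Q, 0 ≤ y)
    (hh : 0 ≤ h) (n : ℕ) :
    ∫ y, (1 - Real.exp (-(h * y))) ^ n ∂Q
      = |(fwdDiff h)^[n] (fun l => ∫ y, Real.exp (-(l * y)) ∂Q) 0| := by
  have hnonneg : 0 ≤ ∫ y, (1 - Real.exp (-(h * y))) ^ n ∂Q :=
    integral_nonneg_of_ae (hpos.mono fun y hy => pow_nonneg (one_sub_exp_neg_mul_nonneg hh hy) n)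
  have hsign (y : ℝ) :
      (Real.exp (-(h * y)) - 1) ^ n = (-1) ^ n * (1 - Real.exp (-(h * y))) ^ n := by
    rw [← mul_pow, neg_one_mul, neg_sub]
  rw [fwdDiff_iter_integral fun k => integrable_exp_neg_mul hpos (by positivity)]
  simp only [fwdDiff_iter_exp_neg_mul, hsign, integral_const_mul]
  rw [abs_mul, abs_neg_one_pow, one_mul, abs_of_nonneg hnonneg]

theorem lintegral_one_sub_exp_neg_mul_div_pow_le [IsFiniteMeasure Q] (hpos : ∀ᵐ y ∂Q, 0 ≤ y)
    (hh : 0 < h) {C : ℝ}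
    (hC : |(fwdDiff h)^[n] (fun l => ∫ y, Real.exp (-(l * y)) ∂Q) 0| ≤ C * h ^ n) :
    ∫⁻ y, ENNReal.ofReal (((1 - Real.exp (-(h * y))) / h) ^ n) ∂Q ≤ ENNReal.ofReal C := by
  have hnonneg : ∀ᵐ y ∂Q, 0 ≤ (1 - Real.exp (-(h * y))) / h :=
    hpos.mono fun y hy => div_nonneg (one_sub_exp_neg_mul_nonneg hh.le hy) hh.le
  have hint : Integrable (fun y => ((1 - Real.exp (-(h * y))) / h) ^ n) Q := by
    refine .of_bound (by fun_prop) ((1 / h) ^ n) (hnonneg.mono fun y hy => ?_)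
    rw [Real.norm_of_nonneg (pow_nonneg hy n)]
    gcongr
    linarith [Real.exp_pos (-(h * y))]
  rw [← ofReal_integral_eq_lintegral_ofReal hint (hnonneg.mono fun y hy => pow_nonneg hy n)]
  simp only [div_pow, integral_div, integral_one_sub_exp_neg_mul_pow hpos hh.le]
  exact ENNReal.ofReal_le_ofReal ((div_le_iff₀ (by positivity)).2 hC)

theorem lintegral_pow_le_of_fwdDiff_iter_laplace_le [IsFiniteMeasure Q] (hpos : ∀ᵐ y ∂Q, 0 ≤ y)
    {C : ℝ} (hC : ∀ᶠ h in 𝓝[>] 0,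
      |(fwdDiff h)^[n] (fun l => ∫ y, Real.exp (-(l * y)) ∂Q) 0| ≤ C * h ^ n) :
    ∫⁻ y, ENNReal.ofReal (y ^ n) ∂Q ≤ ENNReal.ofReal C := by
  have hlim (y : ℝ) : Tendsto (fun h => ENNReal.ofReal (((1 - Real.exp (-(h * y))) / h) ^ n))
      (𝓝[>] 0) (𝓝 (ENNReal.ofReal (y ^ n))) :=
    ENNReal.tendsto_ofReal ((tendsto_one_sub_exp_neg_mul_div y).pow n)
  have hle : ∀ᶠ h in 𝓝[>] 0,
      ∫⁻ y, ENNReal.ofReal (((1 - Real.exp (-(h * y))) / h) ^ n) ∂Q ≤ ENNReal.ofReal C := by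
    filter_upwards [hC, self_mem_nhdsWithin] with h hCh hh
    exact lintegral_one_sub_exp_neg_mul_div_pow_le hpos hh hCh
  calc ∫⁻ y, ENNReal.ofReal (y ^ n) ∂Q
      = ∫⁻ y, liminf (fun h => ENNReal.ofReal (((1 - Real.exp (-(h * y))) / h) ^ n)) (𝓝[>] 0) ∂Q :=
        lintegral_congr fun y => (hlim y).liminf_eq.symm
    _ ≤ liminf (fun h => ∫⁻ y, ENNReal.ofReal (((1 - Real.exp (-(h * y))) / h) ^ n) ∂Q) (𝓝[>] 0) :=
        lintegral_liminf_le fun h => by fun_prop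
    _ ≤ ENNReal.ofReal C := liminf_le_of_frequently_le' hle.frequently

end LaplaceMoments

namespace IsCBISemigroup
variable {φ ψ : ℝ → ℝ} {v : ℝ → ℝ → ℝ} {Qγ : ℝ → ℝ → Measure ℝ} {b x t : ℝ}

theorem ae_nonneg (hQγ : IsCBISemigroup v ψ Qγ) (ht : 0 ≤ t) (hx : 0 ≤ x) :
    ∀ᵐ y ∂Qγ t x, 0 ≤ y :=
  measure_mono_null (fun y (hy : ¬0 ≤ y) => not_le.1 hy) (hQγ t x ht hx).2.1

theorem exists_lintegral_pow_le (hQγ : IsCBISemigroup v ψ Qγ) (hv : IsCumulant φ v) {p : ℕ}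
    (hp : 1 ≤ p) (hφ : HasTaylorAtZero p φ) (hb : ∀ u, 0 ≤ u → b * u ≤ φ u)
    (hψ : HasTaylorAtZero p ψ) (hx : 0 ≤ x) (T : ℝ) :
    ∃ C, 0 ≤ C ∧ ∀ t ∈ Icc 0 T, ∫⁻ y, ENNReal.ofReal (y ^ p) ∂Qγ t x ≤ ENNReal.ofReal C := by
  have hlaplace : HasUniformExpansion (Icc 0 T) p
      fun y => ∫ z, Real.exp (-(y.2 * z)) ∂Qγ y.1 x :=
    (hv.hasUniformExpansion_exp hφ hb hp hψ x T).congr fun t ht l hl =>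
      (hQγ t x ht.1 hx).2.2 l hl
  obtain ⟨C, hC₀, hC⟩ := (hlaplace.isBigO_fwdDiff_iter isCompact_Icc).exists_nonneg
  refine ⟨C, hC₀, fun t ht => ?_⟩
  have := (hQγ t x ht.1 hx).1
  refine lintegral_pow_le_of_fwdDiff_iter_laplace_le (hQγ.ae_nonneg ht.1 hx) ?_
  filter_upwards [(eventually_uniformNhdsGEZero.1 hC.bound).filter_mono
    (nhdsWithin_mono 0 Ioi_subset_Ici_self), self_mem_nhdsWithin] with h hh (hpos : 0 < h)
  simpa [abs_of_pos hpos] using hh t ht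

end IsCBISemigroup

namespace ConditionB
variable {f : ℝ → ℝ} {K : ℝ}

theorem apply_two_pow_le (hf : ConditionB f K) (j : ℕ) : f (2 ^ j) ≤ (K * f 2) ^ j * f 1 := by
  obtain ⟨hK, -, -, hmul, hone⟩ := hf
  have hf2 := hone 2 zero_le_two
  induction j with
  | zero => simp
  | succ j ih =>
    calc f (2 ^ (j + 1)) ≤ K * f 2 * f (2 ^ j) := by
          rw [pow_succ']
          exact hmul 2 (2 ^ j) zero_le_two (by positivity)
      _ ≤ K * f 2 * ((K * f 2) ^ j * f 1) := by gcongr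
      _ = (K * f 2) ^ (j + 1) * f 1 := by ring

theorem exists_le_mul_one_add_pow (hf : ConditionB f K) :
    ∃ p : ℕ, 1 ≤ p ∧ ∃ A, ∀ y, 0 ≤ y → f y ≤ A * (1 + y ^ p) := by
  have hpow := hf.apply_two_pow_le
  obtain ⟨hK, -, hmono, -, hone⟩ := hf
  have hf1 := hone 1 zero_le_one
  have hf2 := hone 2 zero_le_two
  obtain ⟨p, hp⟩ := pow_unbounded_of_one_lt (max 1 (K * f 2)) (one_lt_two (α := ℝ))
  have hp1 : 1 ≤ p := by
    by_contra! h0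
    simp [Nat.lt_one_iff.1 h0] at hp
  refine ⟨p, hp1, 2 ^ p * f 1, fun y hy => ?_⟩
  obtain ⟨j, hj, hyj⟩ : ∃ j : ℕ, (2 ^ p) ^ j ≤ 1 + y ^ p ∧ y ≤ 2 ^ (j + 1) := by
    rcases le_total y 1 with hy1 | hy1
    · exact ⟨0, by simpa using pow_nonneg hy p, by simpa using hy1.trans one_le_two⟩
    · obtain ⟨j, hj, hyj⟩ := exists_nat_pow_near hy1 one_lt_two
      refine ⟨j, ?_, hyj.le⟩
      rw [pow_right_comm]
      linarith [pow_le_pow_left₀ (by positivity) hj p]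
  calc f y ≤ f (2 ^ (j + 1)) := hmono hy (mem_Ici.2 (by positivity)) hyj
    _ ≤ (K * f 2) ^ (j + 1) * f 1 := hpow (j + 1)
    _ ≤ (2 ^ p) ^ (j + 1) * f 1 := by
        gcongr
        exact (le_max_right _ _).trans hp.le
    _ = 2 ^ p * f 1 * (2 ^ p) ^ j := by ring
    _ ≤ 2 ^ p * f 1 * (1 + y ^ p) := by gcongr

end ConditionB

theorem lintegral_ofReal_le_of_le_mul_one_add_pow {Q : Measure ℝ} [IsProbabilityMeasure Q]
    (hpos : ∀ᵐ z ∂Q, 0 ≤ z) {f : ℝ → ℝ} {A C : ℝ} {p : ℕ}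
    (hf : ∀ z, 0 ≤ z → f z ≤ A * (1 + z ^ p)) (hC : 0 ≤ C)
    (hmoment : ∫⁻ z, ENNReal.ofReal (z ^ p) ∂Q ≤ ENNReal.ofReal C) :
    ∫⁻ z, ENNReal.ofReal (f z) ∂Q ≤ ENNReal.ofReal (A * (1 + C)) := by
  calc ∫⁻ z, ENNReal.ofReal (f z) ∂Q
      ≤ ∫⁻ z, ENNReal.ofReal A * (1 + ENNReal.ofReal (z ^ p)) ∂Q := by
        refine lintegral_mono_ae (hpos.mono fun z hz => ?_)
        rw [← ENNReal.ofReal_one, ← ENNReal.ofReal_add zero_le_one (by positivity),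
          ← ENNReal.ofReal_mul' (by positivity)]
        exact ENNReal.ofReal_le_ofReal (hf z hz)
    _ = ENNReal.ofReal A * (1 + ∫⁻ z, ENNReal.ofReal (z ^ p) ∂Q) := by
        rw [lintegral_const_mul _ (by fun_prop), lintegral_add_left measurable_const,
          lintegral_one, measure_univ]
    _ ≤ ENNReal.ofReal A * (1 + ENNReal.ofReal C) := by gcongr
    _ = ENNReal.ofReal (A * (1 + C)) := by
        rw [ENNReal.ofReal_mul' (by positivity), ENNReal.ofReal_add zero_le_one hC,
          ENNReal.ofReal_one]

theorem cbi_f_moment_locally_bounded_poly_general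
    {φ ψ : ℝ → ℝ} {β σ h : ℝ} {m ν : Measure ℝ}
    (hφ : IsBranchingMechanism φ β σ m) (hψ : IsImmigrationMechanism ψ h ν)
    {p : ℕ} (hp : 1 ≤ p) (hmν : ∫⁻ z in Ioi 1, ENNReal.ofReal (z ^ p) ∂(m + ν) < ⊤)
    {v : ℝ → ℝ → ℝ} (hv : IsCumulant φ v) {Qγ : ℝ → ℝ → Measure ℝ} (hQγ : IsCBISemigroup v ψ Qγ)
    {f : ℝ → ℝ} {A : ℝ} (hf : ∀ z, 0 ≤ z → f z ≤ A * (1 + z ^ p)) {x : ℝ} (hx : 0 ≤ x) :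
    (∀ t, 0 ≤ t → ∫⁻ z, ENNReal.ofReal (f z) ∂(Qγ t x) < ⊤) ∧
      ∀ T, ∃ C : ℝ, ∀ t ∈ Icc 0 T,
        ∫⁻ z, ENNReal.ofReal (f z) ∂(Qγ t x) ≤ ENNReal.ofReal C := by
  rw [Measure.restrict_add, lintegral_add_measure, ENNReal.add_lt_top] at hmν
  obtain ⟨b, hb⟩ := hφ.exists_mul_le (by simpa using integrableOn_Ioi_one_pow hp hmν.1)
  have hbounded (T : ℝ) : ∃ C : ℝ, ∀ t ∈ Icc 0 T,
      ∫⁻ z, ENNReal.ofReal (f z) ∂(Qγ t x) ≤ ENNReal.ofReal C := by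
    obtain ⟨C, hC₀, hC⟩ := hQγ.exists_lintegral_pow_le hv hp (hφ.hasTaylorAtZero hp hmν.1) hb
      (hψ.hasTaylorAtZero hp hmν.2) hx T
    refine ⟨A * (1 + C), fun t ht => ?_⟩
    have := (hQγ t x ht.1 hx).1
    exact lintegral_ofReal_le_of_le_mul_one_add_pow (hQγ.ae_nonneg ht.1 hx) hf hC₀ (hC t ht)
  refine ⟨fun t ht => ?_, hbounded⟩
  obtain ⟨C, hC⟩ := hbounded t
  exact (hC t (right_mem_Icc.2 ht)).trans_lt ENNReal.ofReal_lt_top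

end

/-- Lemma 4.4: if `m + ν` has finite moments of every order on `(1,∞)`, then
for every `x ≥ 0` the function `t ↦ ∫ f dQ^γ_t(x,·)` is finite and locally
bounded on `[0,∞)`. -/
theorem cbi_f_moment_locally_bounded_poly
    (f : ℝ → ℝ) (K : ℝ) (hf : ConditionB f K)
    (φ : ℝ → ℝ) (β σ : ℝ) (m : Measure ℝ)
    (hφ : IsBranchingMechanism φ β σ m) (hGrey : GreyCondition φ)
    (ψ : ℝ → ℝ) (h : ℝ) (ν : Measure ℝ)
    (hψ : IsImmigrationMechanism ψ h ν)
    (hmν : ∀ n : ℕ, 1 ≤ n →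
      (∫⁻ z in Set.Ioi 1, ENNReal.ofReal (z ^ n) ∂(m + ν)) < ⊤)
    (v : ℝ → ℝ → ℝ) (hv : IsCumulant φ v)
    (Qγ : ℝ → ℝ → Measure ℝ) (hQγ : IsCBISemigroup v ψ Qγ)
    (x : ℝ) (hx : 0 ≤ x) :
    (∀ t, 0 ≤ t → (∫⁻ z, ENNReal.ofReal (f z) ∂(Qγ t x)) < ⊤) ∧
      ∀ T, 0 < T → ∃ C : ℝ, ∀ t ∈ Set.Icc (0:ℝ) T,
        (∫⁻ z, ENNReal.ofReal (f z) ∂(Qγ t x)) ≤ ENNReal.ofReal C := by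
  obtain ⟨p, hp, A, hA⟩ := hf.exists_le_mul_one_add_pow
  exact (cbi_f_moment_locally_bounded_poly_general hφ hψ hp (hmν p hp) hv hQγ hA hx).imp_right
    fun hbounded T _ => hbounded T
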